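/- Assume B is bounded below on the closure of R(D) and that D kernel/range decomposes. If BD kernel/range decomposes, then DB kernel/range decomposes, i.e. X = N(DB) ⊕ closure(R(DB)) as a topological direct sum. -/

import Mathlib

noncomputable section

variable {X : Type*} [NormedAddCommGroup X] [NormedSpace ℂ X]

/-- A complex normed space is reflexive if the canonical inclusion into its double dual is
surjective. -/
def ReflexiveSpace (X : Type*) [NormedAddCommGroup X] [NormedSpace ℂ X] : Prop :=
  Function.Surjective (NormedSpace.inclusionInDoubleDual ℂ X)

/-- The open bisector `S_ω = {z ≠ 0 : |arg z| < ω or |arg (-z)| < ω}`. -/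
def Sector (ω : ℝ) : Set ℂ :=
  {z | z ≠ 0 ∧ (|Complex.arg z| < ω ∨ |Complex.arg (-z)| < ω)}

/-- The kernel of a partially defined operator, viewed as a subspace of the ambient space. -/
def pker (A : X →ₗ.[ℂ] X) : Submodule ℂ X :=
  (LinearMap.ker A.toFun).map A.domain.subtype

/-- The range of a partially defined operator. -/
def pran (A : X →ₗ.[ℂ] X) : Submodule ℂ X :=
  LinearMap.range A.toFun

/-- `X = N ⊕ M` as a topological direct sum: `N` and `M` are closed complementary subspaces. -/
def IsTopDirectSum (N M : Submodule ℂ X) : Prop :=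
  IsClosed (N : Set X) ∧ IsClosed (M : Set X) ∧ N ⊓ M = ⊥ ∧ N ⊔ M = ⊤

/-- `A` kernel/range decomposes: `X = N(A) ⊕ closure (R(A))` as a topological direct sum. -/
def KerRanDecomp (A : X →ₗ.[ℂ] X) : Prop :=
  IsTopDirectSum (pker A) (pran A).topologicalClosure

/-- A closed operator `A` is bisectorial of angle `ω` if for every `ω' ∈ (ω, π/2)` there is
`C > 0` such that for every `λ ∉ S_{ω'}` the map `I + λA : D(A) → X` is a bijection whose
inverse is bounded with norm at most `C`. -/
def IsBisectorial (A : X →ₗ.[ℂ] X) (ω : ℝ) : Prop :=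
  A.IsClosed ∧
    ∀ ω' ∈ Set.Ioo ω (Real.pi / 2), ∃ C > 0, ∀ lam : ℂ, lam ∉ Sector ω' →
      Function.Bijective (fun u : A.domain => (u : X) + lam • A u) ∧
        ∀ u : A.domain, ‖(u : X)‖ ≤ C * ‖(u : X) + lam • A u‖

/-- The operator `BD`, with domain `D(D)`, acting by `u ↦ B (D u)`. -/
def opBD (B : X →L[ℂ] X) (D : X →ₗ.[ℂ] X) : X →ₗ.[ℂ] X :=
  ⟨D.domain, (B : X →ₗ[ℂ] X).comp D.toFun⟩

/-- The operator `DB`, with domain `{u : B u ∈ D(D)}`, acting by `u ↦ D (B u)`. -/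
def opDB (B : X →L[ℂ] X) (D : X →ₗ.[ℂ] X) : X →ₗ.[ℂ] X :=
  ⟨D.domain.comap (B : X →ₗ[ℂ] X),
    D.toFun.comp ((B : X →ₗ[ℂ] X).restrict fun _ hx => hx)⟩

/-- `B` is bounded below on the set `S`. -/
def BoundedBelowOn (B : X →L[ℂ] X) (S : Set X) : Prop :=
  ∃ c > 0, ∀ u ∈ S, c * ‖u‖ ≤ ‖B u‖

/-!
On `closure R(D)` the map `B` is injective with closed range. Hence `N(BD) = N(D)` and
`closure R(BD) = B (closure R(D))`, so the decomposition of `BD` reads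
`X = N(D) ⊕ B (closure R(D))`. Pulling it back along `B` gives
`X = B⁻¹ N(D) ⊕ closure R(D)`, where `B⁻¹ N(D) = N(DB)`. Finally `R(DB) = R(D)`, because every
vector of `D(D)` agrees modulo `N(D)` with a vector of `R(B)`.
-/

section Module

variable {R M M₂ : Type*} [Ring R] [AddCommGroup M] [AddCommGroup M₂] [Module R M] [Module R M₂]
  {f : M →ₗ[R] M₂} {p : Submodule R M} {q : Submodule R M₂}

theorem disjoint_comap_of_disjoint_map (hf : Disjoint p (LinearMap.ker f))
    (h : Disjoint q (p.map f)) : Disjoint (q.comap f) p := by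
  rw [Submodule.disjoint_def] at h ⊢
  intro x hxq hxp
  exact LinearMap.disjoint_ker.mp hf x hxp (h (f x) hxq (Submodule.mem_map_of_mem hxp))

theorem codisjoint_comap_of_codisjoint_map (h : Codisjoint q (p.map f)) :
    Codisjoint (q.comap f) p := by
  rw [Submodule.codisjoint_iff_exists_add_eq] at h ⊢
  intro x
  obtain ⟨n, _, hn, ⟨r, hr, rfl⟩, hx⟩ := h (f x)
  refine ⟨x - r, r, ?_, hr, sub_add_cancel x r⟩
  rwa [Submodule.mem_comap, map_sub, ← hx, add_sub_cancel_right]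

theorem isCompl_comap_of_isCompl_map (hf : Disjoint p (LinearMap.ker f))
    (h : IsCompl q (p.map f)) : IsCompl (q.comap f) p :=
  ⟨disjoint_comap_of_disjoint_map hf h.disjoint, codisjoint_comap_of_codisjoint_map h.codisjoint⟩

end Module

section BoundedBelow

variable {𝕜 E F : Type*} [NormedField 𝕜] [NormedAddCommGroup E] [NormedSpace 𝕜 E]
  [NormedAddCommGroup F] [NormedSpace 𝕜 F] {f : E →L[𝕜] F} {p : Submodule 𝕜 E} {c : ℝ}

theorem disjoint_ker_of_le_norm (hc : 0 < c) (hf : ∀ u ∈ p, c * ‖u‖ ≤ ‖f u‖) :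
    Disjoint p (LinearMap.ker (f : E →ₗ[𝕜] F)) := by
  refine LinearMap.disjoint_ker.mpr fun u hu (hfu : f u = 0) ↦ norm_le_zero_iff.mp ?_
  have hle : c * ‖u‖ ≤ 0 := by simpa only [hfu, norm_zero] using hf u hu
  exact nonpos_of_mul_nonpos_right hle hc

theorem isClosed_map_of_le_norm [CompleteSpace E] (hc : 0 < c)
    (hf : ∀ u ∈ p, c * ‖u‖ ≤ ‖f u‖) (hp : IsClosed (p : Set E)) :
    IsClosed (p.map (f : E →ₗ[𝕜] F) : Set F) := by
  have : CompleteSpace p := hp.completeSpace_coe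
  let g : p →L[𝕜] F := f.comp p.subtypeL
  have hg : AntilipschitzWith (Real.toNNReal c⁻¹) g := by
    refine AddMonoidHomClass.antilipschitz_of_bound g fun u ↦ ?_
    rw [Real.coe_toNNReal _ (inv_pos.mpr hc).le, le_inv_mul_iff₀ hc]
    exact hf u u.2
  have hrange : Set.range g = p.map (f : E →ₗ[𝕜] F) := by
    rw [Submodule.map_coe, Set.image_eq_range]
    rfl
  exact hrange ▸ hg.isClosed_range g.uniformContinuous

theorem topologicalClosure_map_of_le_norm [CompleteSpace E] (hc : 0 < c)
    (hf : ∀ u ∈ p.topologicalClosure, c * ‖u‖ ≤ ‖f u‖) :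
    (p.map (f : E →ₗ[𝕜] F)).topologicalClosure = p.topologicalClosure.map (f : E →ₗ[𝕜] F) :=
  le_antisymm
    (Submodule.topologicalClosure_minimal _ (Submodule.map_mono p.le_topologicalClosure)
      (isClosed_map_of_le_norm hc hf p.isClosed_topologicalClosure))
    (p.topologicalClosure_map f)

end BoundedBelow

theorem isTopDirectSum_iff {N M : Submodule ℂ X} :
    IsTopDirectSum N M ↔ IsClosed (N : Set X) ∧ IsClosed (M : Set X) ∧ IsCompl N M := by
  rw [IsTopDirectSum, isCompl_iff, disjoint_iff, codisjoint_iff]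

theorem mem_pker {A : X →ₗ.[ℂ] X} {x : X} : x ∈ pker A ↔ ∃ h : x ∈ A.domain, A ⟨x, h⟩ = 0 := by
  simp [pker]

section Composition

variable {B : X →L[ℂ] X} {D : X →ₗ.[ℂ] X}

theorem pker_opBD (h : Disjoint (pran D) (LinearMap.ker (B : X →ₗ[ℂ] X))) :
    pker (opBD B D) = pker D := by
  have hker : LinearMap.ker ((B : X →ₗ[ℂ] X).comp D.toFun) = LinearMap.ker D.toFun :=
    le_antisymm (fun u hu ↦ LinearMap.disjoint_ker.mp h (D u) ⟨u, rfl⟩ hu)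
      (LinearMap.ker_le_ker_comp _ _)
  exact congrArg (Submodule.map D.domain.subtype) hker

variable (B D) in
theorem pran_opBD : pran (opBD B D) = (pran D).map (B : X →ₗ[ℂ] X) :=
  LinearMap.range_comp D.toFun (B : X →ₗ[ℂ] X)

variable (B D) in
theorem pker_opDB : pker (opDB B D) = (pker D).comap (B : X →ₗ[ℂ] X) := by
  ext x
  rw [Submodule.mem_comap, mem_pker, mem_pker]
  rfl

theorem pran_opDB (h : Codisjoint (pker D) (LinearMap.range (B : X →ₗ[ℂ] X))) :
    pran (opDB B D) = pran D := by
  apply le_antisymm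
  · rintro _ ⟨u, rfl⟩
    exact ⟨⟨B u, u.2⟩, rfl⟩
  · rintro _ ⟨u, rfl⟩
    obtain ⟨n, _, hn, ⟨r, rfl⟩, hu⟩ := Submodule.codisjoint_iff_exists_add_eq.mp h u
    obtain ⟨hn_dom, hDn⟩ := mem_pker.mp hn
    have hBr : B r = u - n := eq_sub_of_add_eq' hu
    have hBr_dom : B r ∈ D.domain := hBr ▸ sub_mem u.2 hn_dom
    refine ⟨⟨r, hBr_dom⟩, ?_⟩
    calc D ⟨B r, hBr_dom⟩ = D (u - ⟨n, hn_dom⟩) := congrArg D (Subtype.ext hBr)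
      _ = D u := by rw [D.map_sub, hDn, sub_zero]

end Composition

theorem stmt_13_general [CompleteSpace X] (D : X →ₗ.[ℂ] X) (B : X →L[ℂ] X)
    (hlow : BoundedBelowOn B ((pran D).topologicalClosure : Set X))
    (hBD : KerRanDecomp (opBD B D)) : KerRanDecomp (opDB B D) := by
  obtain ⟨c, hc, hlow⟩ := hlow
  have hinj := disjoint_ker_of_le_norm hc hlow
  have hker : pker (opBD B D) = pker D :=
    pker_opBD (hinj.mono_left (pran D).le_topologicalClosure)
  have hran : (pran (opBD B D)).topologicalClosure =
      (pran D).topologicalClosure.map (B : X →ₗ[ℂ] X) := by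
    rw [pran_opBD, topologicalClosure_map_of_le_norm hc hlow]
  rw [KerRanDecomp, isTopDirectSum_iff, hker, hran] at hBD
  obtain ⟨hclosed, -, hcompl⟩ := hBD
  have hranDB : pran (opDB B D) = pran D :=
    pran_opDB (hcompl.codisjoint.mono_right LinearMap.map_le_range)
  rw [KerRanDecomp, isTopDirectSum_iff, pker_opDB, hranDB]
  exact ⟨hclosed.preimage B.continuous, Submodule.isClosed_topologicalClosure _,
    isCompl_comap_of_isCompl_map hinj hcompl⟩

/-- If `B` is bounded below on the closure of `R(D)`, `D` kernel/range
decomposes and `BD` kernel/range decomposes, then `DB` kernel/range decomposes: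
`X = N(DB) ⊕ closure (R(DB))` as a topological direct sum. -/
theorem stmt_13 {X : Type*} [NormedAddCommGroup X] [NormedSpace ℂ X] [CompleteSpace X]
    (hrefl : ReflexiveSpace X) (D : X →ₗ.[ℂ] X) (hD : D.IsClosed)
    (hdense : Dense (D.domain : Set X)) (B : X →L[ℂ] X)
    (hlow : BoundedBelowOn B ((pran D).topologicalClosure : Set X))
    (hD' : KerRanDecomp D) (hBD : KerRanDecomp (opBD B D)) :
    KerRanDecomp (opDB B D) :=
  stmt_13_general D B hlow hBD
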